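/- For every σ > 0 and every α ∈ ℝ, 0 ≤ ψ_G(α;σ) − max{0, 1−α} ≤ σ/√(2π). Moreover the upper bound is attained at α = 1, i.e. ψ_G(1;σ) = σ/√(2π). -/

import Mathlib

open Real Set

/-- The probability density function of the standard normal distribution. -/
noncomputable def stdGaussPDF (v : ℝ) : ℝ :=
  (1 / Real.sqrt (2 * Real.pi)) * Real.exp (-v ^ 2 / 2)

/-- The cumulative distribution function of the standard normal distribution. -/
noncomputable def stdGaussCDF (v : ℝ) : ℝ :=
  ∫ t in Set.Iic v, stdGaussPDF t

/-- The smooth Hinge loss ψ_G(α;σ) = Φ(v)(1−α) + φ(v)σ with v = (1−α)/σ. -/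
noncomputable def psiG (σ α : ℝ) : ℝ :=
  stdGaussCDF ((1 - α) / σ) * (1 - α) + stdGaussPDF ((1 - α) / σ) * σ

lemma pdf_eq (t : ℝ) :
    stdGaussPDF t = (1 / Real.sqrt (2 * Real.pi)) * Real.exp (-(1/2) * t ^ 2) := by
  unfold stdGaussPDF
  congr 2
  ring

lemma pdf_int : MeasureTheory.Integrable stdGaussPDF := by
  rw [funext pdf_eq]
  exact (integrable_exp_neg_mul_sq (by norm_num)).const_mul _

lemma pdf_int' : MeasureTheory.Integrable (fun t => -t * stdGaussPDF t) := by
  have h := (integrable_mul_exp_neg_mul_sq (b := 1/2) (by norm_num)).const_mul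
    (-(1 / Real.sqrt (2 * Real.pi)))
  refine h.congr (Filter.Eventually.of_forall fun t => ?_)
  simp only [pdf_eq]
  ring

lemma pdf_nonneg (t : ℝ) : 0 ≤ stdGaussPDF t := by
  unfold stdGaussPDF; positivity

lemma pdf_le (t : ℝ) : stdGaussPDF t ≤ 1 / Real.sqrt (2 * Real.pi) := by
  unfold stdGaussPDF
  apply mul_le_of_le_one_right (by positivity)
  rw [Real.exp_le_one_iff]
  nlinarith [sq_nonneg t]

lemma pdf_neg (t : ℝ) : stdGaussPDF (-t) = stdGaussPDF t := by
  unfold stdGaussPDF; simp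

lemma pdf_total : ∫ t, stdGaussPDF t = 1 := by
  rw [funext pdf_eq, MeasureTheory.integral_const_mul, integral_gaussian]
  have : Real.pi / (1/2) = 2 * Real.pi := by ring
  rw [this]
  have : Real.sqrt (2 * Real.pi) ≠ 0 := by positivity
  field_simp

lemma cdf_neg (v : ℝ) : stdGaussCDF (-v) = 1 - stdGaussCDF v := by
  unfold stdGaussCDF
  have h1 := intervalIntegral.integral_Iic_add_Ioi (b := v)
    pdf_int.integrableOn pdf_int.integrableOn
  have h2 := integral_comp_neg_Iic (-v) stdGaussPDF
  simp only [pdf_neg, neg_neg] at h2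
  rw [pdf_total] at h1
  linarith

lemma pdf_deriv (t : ℝ) : HasDerivAt stdGaussPDF (-t * stdGaussPDF t) t := by
  unfold stdGaussPDF
  have h : HasDerivAt (fun x : ℝ => -x ^ 2 / 2) (-t) t := by
    have h0 := ((hasDerivAt_pow 2 t).neg).div_const 2
    have e : -(((2 : ℕ) : ℝ) * t ^ (2 - 1)) / 2 = -t := by
      norm_num; ring
    rw [e] at h0
    exact h0
  have h1 := (h.exp).const_mul (1 / Real.sqrt (2 * Real.pi))
  have e : 1 / Real.sqrt (2 * Real.pi) * (Real.exp (-t ^ 2 / 2) * -t)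
      = -t * (1 / Real.sqrt (2 * Real.pi) * Real.exp (-t ^ 2 / 2)) := by ring
  rw [e] at h1
  exact h1

lemma pdf_tendsto : Filter.Tendsto stdGaussPDF Filter.atBot (nhds 0) :=
  MeasureTheory.tendsto_zero_of_hasDerivAt_of_integrableOn_Iic (a := 0)
    (fun x _ => pdf_deriv x) pdf_int'.integrableOn pdf_int.integrableOn

lemma g_nonneg (v : ℝ) : 0 ≤ stdGaussCDF v * v + stdGaussPDF v := by
  have h := MeasureTheory.integral_Iic_of_hasDerivAt_of_tendsto' (a := v)
    (fun x _ => pdf_deriv x) pdf_int'.integrableOn pdf_tendsto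
  have h2 : ∫ t in Set.Iic v, -v * stdGaussPDF t ≤ ∫ t in Set.Iic v, -t * stdGaussPDF t := by
    apply MeasureTheory.setIntegral_mono_on (pdf_int.const_mul _).integrableOn
      pdf_int'.integrableOn measurableSet_Iic
    intro t ht
    exact mul_le_mul_of_nonneg_right (neg_le_neg ht) (pdf_nonneg t)
  rw [MeasureTheory.integral_const_mul, h] at h2
  unfold stdGaussCDF
  linarith

lemma g_le (v : ℝ) (hv : v ≤ 0) :
    stdGaussCDF v * v + stdGaussPDF v ≤ 1 / Real.sqrt (2 * Real.pi) := by
  have h : 0 ≤ stdGaussCDF v := MeasureTheory.integral_nonneg pdf_nonneg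
  have := mul_nonpos_of_nonneg_of_nonpos h hv
  linarith [pdf_le v]

lemma g_both (v : ℝ) : 0 ≤ stdGaussCDF v * v + stdGaussPDF v - max 0 v ∧
    stdGaussCDF v * v + stdGaussPDF v - max 0 v ≤ 1 / Real.sqrt (2 * Real.pi) := by
  rcases le_total v 0 with hv | hv
  · rw [max_eq_left hv, sub_zero]
    exact ⟨g_nonneg v, g_le v hv⟩
  · rw [max_eq_right hv]
    have h1 := g_nonneg (-v)
    have h2 := g_le (-v) (by linarith)
    rw [cdf_neg, pdf_neg] at h1 h2
    constructor <;> linarith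

theorem stmt_3 (σ : ℝ) (hσ : 0 < σ) :
    (∀ α : ℝ,
      0 ≤ psiG σ α - max 0 (1 - α) ∧
      psiG σ α - max 0 (1 - α) ≤ σ / Real.sqrt (2 * Real.pi)) ∧
    psiG σ 1 = σ / Real.sqrt (2 * Real.pi) := by
  constructor
  · intro α
    obtain ⟨h1, h2⟩ := g_both ((1 - α) / σ)
    have e : psiG σ α - max 0 (1 - α) = σ * (stdGaussCDF ((1 - α) / σ) * ((1 - α) / σ)
        + stdGaussPDF ((1 - α) / σ) - max 0 ((1 - α) / σ)) := by
      have hm : σ * max 0 ((1 - α) / σ) = max 0 (1 - α) := by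
        rw [mul_max_of_nonneg _ _ hσ.le, mul_zero, mul_div_cancel₀ _ hσ.ne']
      rw [mul_sub, hm]
      unfold psiG
      field_simp
    rw [e]
    refine ⟨mul_nonneg hσ.le h1, ?_⟩
    have := mul_le_mul_of_nonneg_left h2 hσ.le
    rwa [mul_one_div] at this
  · simp [psiG, stdGaussPDF]
    ring
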